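/- Let n ∈ ℕ, let I_n be a finite set of knapsack instances i = (c, a, b) of dimension n with a_1,…,a_n > 0 and b ≥ 0, let p : I_n → [0,1] be a probability mass function, and let V assign a value function to each instance i ∈ I_n. Then Φ_n(V, V*) ≤ Ψ_n(V), i.e., Σ_{i∈I_n} p(i) · |V(n; i, 0) − V*(n; i, 0)| ≤ Σ_{i∈I_n} p(i) · Σ_{k=1}^{n} Σ { δ̄(k; i, ξ) : ξ ∈ B_{n,k} and Σ_{j=k+1}^n a_j ξ_j ≤ b }. -/

import Mathlib

/-!
The optimal value function `V*` satisfies the Bellman equation (`knapSubVal_succ`), so at each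
level `k` and feasible partial assignment `ξ` the error `|V - V*|` is at most `δ̄(k; i, ξ)` plus
the errors of `V` at level `k - 1` on the successors `ξ` and (when feasible) `ξ + e^k`, because
`|max x y - max x' y'| ≤ |x - x'| + |y - y'|`.

Every feasible partial assignment of level `k - 1` is the successor of exactly one feasible partial
assignment of level `k` (`sum_feasible`). Hence the total errors `E k = ∑ ξ, |V(k; ξ) - V*(k; ξ)|`
over the feasible `ξ` of level `k` satisfy `E k ≤ (∑ ξ, δ̄(k; ξ)) + E (k - 1)`. Since `E 0 = 0` and
`E n` contains the term for `ξ = 0`, telescoping gives the inequality for each instance, and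
averaging over `p` finishes the proof.
-/

/-- `upd n ξ p` is `ξ + e^{p+1}`, i.e. `ξ` with the (0-indexed) position `p` set to `1`. -/
def upd (n : ℕ) (ξ : Fin n → Bool) (p : ℕ) : Fin n → Bool :=
  fun j => if j.val = p then true else ξ j

/-- `headSum n k a x = Σ_{j=1}^{k} a_j x_j` (0-indexed positions `< k`). -/
def headSum (n k : ℕ) (a : Fin n → ℝ) (x : Fin n → Bool) : ℝ :=
  ∑ j ∈ Finset.univ.filter (fun j : Fin n => j.val < k), if x j then a j else 0

/-- `tailSum n k a ξ = Σ_{j=k+1}^{n} a_j ξ_j` (0-indexed positions `≥ k`). -/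
def tailSum (n k : ℕ) (a : Fin n → ℝ) (ξ : Fin n → Bool) : ℝ :=
  ∑ j ∈ Finset.univ.filter (fun j : Fin n => k ≤ j.val), if ξ j then a j else 0

/-- `knapSubVal n c a b k ξ` is `V*(k; i, ξ)` for the knapsack instance `i = (c,a,b)`. -/
noncomputable def knapSubVal (n : ℕ) (c a : Fin n → ℝ) (b : ℝ) (k : ℕ) (ξ : Fin n → Bool) : ℝ :=
  sSup {v | ∃ x : Fin n → Bool,
    headSum n k a x ≤ b - tailSum n k a ξ ∧ v = headSum n k c x}

lemma upd_eq_update {n : ℕ} (ξ : Fin n → Bool) (ℓ : Fin n) :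
    upd n ξ ℓ.val = Function.update ξ ℓ true := by
  funext j
  simp [upd, Function.update_apply, Fin.ext_iff]

lemma headSum_succ {n : ℕ} (ℓ : Fin n) (a : Fin n → ℝ) (x : Fin n → Bool) :
    headSum n (ℓ.val + 1) a x = headSum n ℓ.val a x + if x ℓ then a ℓ else 0 := by
  unfold headSum
  have h : Finset.univ.filter (fun j : Fin n => j.val < ℓ.val + 1) =
      insert ℓ (Finset.univ.filter (fun j : Fin n => j.val < ℓ.val)) := by
    ext j
    simp [Fin.ext_iff]
    omega
  rw [h, Finset.sum_insert (by simp), add_comm]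

lemma tailSum_succ {n : ℕ} (ℓ : Fin n) (a : Fin n → ℝ) (ξ : Fin n → Bool) :
    tailSum n ℓ.val a ξ = (if ξ ℓ then a ℓ else 0) + tailSum n (ℓ.val + 1) a ξ := by
  unfold tailSum
  have h : Finset.univ.filter (fun j : Fin n => ℓ.val ≤ j.val) =
      insert ℓ (Finset.univ.filter (fun j : Fin n => ℓ.val + 1 ≤ j.val)) := by
    ext j
    simp [Fin.ext_iff]
    omega
  rw [h, Finset.sum_insert (by simp)]

lemma headSum_update {n : ℕ} (ℓ : Fin n) (a : Fin n → ℝ) (x : Fin n → Bool) (t : Bool) :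
    headSum n ℓ.val a (Function.update x ℓ t) = headSum n ℓ.val a x := by
  unfold headSum
  refine Finset.sum_congr rfl fun j hj => ?_
  have hj' : j ≠ ℓ := by
    rintro rfl
    simp at hj
  simp [Function.update_of_ne hj']

lemma tailSum_update {n : ℕ} (ℓ : Fin n) (a : Fin n → ℝ) (x : Fin n → Bool) (t : Bool) :
    tailSum n (ℓ.val + 1) a (Function.update x ℓ t) = tailSum n (ℓ.val + 1) a x := by
  unfold tailSum
  refine Finset.sum_congr rfl fun j hj => ?_
  have hj' : j ≠ ℓ := by
    rintro rfl
    simp at hj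
  simp [Function.update_of_ne hj']

lemma headSum_nonneg {n k : ℕ} {a : Fin n → ℝ} (ha : ∀ j, 0 < a j) (x : Fin n → Bool) :
    0 ≤ headSum n k a x := by
  refine Finset.sum_nonneg fun j _ => ?_
  split_ifs
  exacts [(ha j).le, le_rfl]

/-- At a feasible `ξ` the supremum defining `V*` is attained: the value set is finite, and it is
nonempty because the zero vector is admissible. -/
lemma knapSubVal_isGreatest {n : ℕ} (c a : Fin n → ℝ) (b : ℝ) (k : ℕ) (ξ : Fin n → Bool)
    (h : tailSum n k a ξ ≤ b) :
    IsGreatest {v | ∃ x : Fin n → Bool,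
      headSum n k a x ≤ b - tailSum n k a ξ ∧ v = headSum n k c x}
      (knapSubVal n c a b k ξ) := by
  have hfin : {v | ∃ x : Fin n → Bool,
      headSum n k a x ≤ b - tailSum n k a ξ ∧ v = headSum n k c x}.Finite := by
    refine (Set.finite_range (fun x : Fin n → Bool => headSum n k c x)).subset ?_
    rintro v ⟨x, -, rfl⟩
    exact ⟨x, rfl⟩
  have hne : {v | ∃ x : Fin n → Bool,
      headSum n k a x ≤ b - tailSum n k a ξ ∧ v = headSum n k c x}.Nonempty := by
    refine ⟨_, fun _ => false, ?_, rfl⟩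
    simpa [headSum] using h
  exact ⟨hne.csSup_mem hfin, fun v hv => le_csSup hfin.bddAbove hv⟩

/-- The Bellman equation for the optimal value function `V*`. -/
lemma knapSubVal_succ {n : ℕ} (c a : Fin n → ℝ) (b : ℝ) (ha : ∀ j, 0 < a j) (ℓ : Fin n)
    (ξ : Fin n → Bool) (hξ : ξ ℓ = false) (h : tailSum n (ℓ.val + 1) a ξ ≤ b) :
    knapSubVal n c a b (ℓ.val + 1) ξ =
      if a ℓ + tailSum n (ℓ.val + 1) a ξ ≤ b then
        max (knapSubVal n c a b ℓ.val ξ) (c ℓ + knapSubVal n c a b ℓ.val (upd n ξ ℓ.val))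
      else knapSubVal n c a b ℓ.val ξ := by
  have t0 : tailSum n ℓ.val a ξ = tailSum n (ℓ.val + 1) a ξ := by
    simp [tailSum_succ, hξ]
  have t1 : tailSum n ℓ.val a (upd n ξ ℓ.val) = a ℓ + tailSum n (ℓ.val + 1) a ξ := by
    simp [tailSum_succ, upd_eq_update, tailSum_update]
  obtain ⟨⟨x, hx, hxv⟩, hub⟩ := knapSubVal_isGreatest c a b (ℓ.val + 1) ξ h
  obtain ⟨⟨y, hy, hyv⟩, hub0⟩ := knapSubVal_isGreatest c a b ℓ.val ξ (t0 ▸ h)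
  rw [t0] at hy hub0
  have hge : knapSubVal n c a b ℓ.val ξ ≤ knapSubVal n c a b (ℓ.val + 1) ξ :=
    hub ⟨Function.update y ℓ false, by simpa [headSum_succ, headSum_update] using hy,
      by simpa [headSum_succ, headSum_update] using hyv⟩
  have hle : x ℓ = false → knapSubVal n c a b (ℓ.val + 1) ξ ≤ knapSubVal n c a b ℓ.val ξ :=
    fun hxl => hub0 ⟨x, by simpa [headSum_succ, hxl] using hx,
      by simpa [headSum_succ, hxl] using hxv⟩
  have hpos := headSum_nonneg (k := ℓ.val) ha x
  split_ifs with hf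
  · obtain ⟨⟨z, hz, hzv⟩, hub1⟩ :=
      knapSubVal_isGreatest c a b ℓ.val (upd n ξ ℓ.val) (t1.trans_le hf)
    rw [t1] at hz hub1
    apply le_antisymm
    · cases hxl : x ℓ
      · exact (hle hxl).trans (le_max_left _ _)
      · rw [headSum_succ, hxl, if_pos rfl] at hx hxv
        have := hub1 ⟨x, by linarith, rfl⟩
        exact le_max_of_le_right (by linarith)
    · refine max_le hge (hub ⟨Function.update z ℓ true, ?_, ?_⟩)
      · rw [headSum_succ, headSum_update, Function.update_self, if_pos rfl]
        linarith
      · rw [headSum_succ, headSum_update, Function.update_self, if_pos rfl]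
        linarith
  · refine le_antisymm (hle ?_) hge
    -- The first `ℓ` chosen weights are nonnegative, so item `ℓ` cannot fit.
    cases hxl : x ℓ
    · rfl
    · rw [headSum_succ, hxl, if_pos rfl] at hx
      exact absurd (by linarith) hf

/-- The feasible partial assignments of level `k`: those `ξ ∈ B_{n,k}` whose weight is at
most `b`. -/
noncomputable def feasible (n : ℕ) (a : Fin n → ℝ) (b : ℝ) (k : ℕ) : Finset (Fin n → Bool) :=
  Finset.univ.filter fun ξ => (∀ j : Fin n, j.val < k → ξ j = false) ∧ tailSum n k a ξ ≤ b

lemma mem_feasible {n : ℕ} {a : Fin n → ℝ} {b : ℝ} {k : ℕ} {ξ : Fin n → Bool} :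
    ξ ∈ feasible n a b k ↔ (∀ j : Fin n, j.val < k → ξ j = false) ∧ tailSum n k a ξ ≤ b := by
  simp [feasible]

/-- Summing over the feasible assignments of one level amounts to summing over the successors of
the feasible assignments of the next level. -/
lemma sum_feasible {n : ℕ} (a : Fin n → ℝ) (b : ℝ) (ha : ∀ j, 0 < a j) (ℓ : Fin n)
    (f : (Fin n → Bool) → ℝ) :
    ∑ ξ ∈ feasible n a b ℓ.val, f ξ =
      ∑ ξ ∈ feasible n a b (ℓ.val + 1),
        (f ξ + if a ℓ + tailSum n (ℓ.val + 1) a ξ ≤ b then f (upd n ξ ℓ.val) else 0) := by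
  rw [Finset.sum_add_distrib, ← Finset.sum_filter,
    ← Finset.sum_filter_add_sum_filter_not (feasible n a b ℓ.val) (fun ξ => ξ ℓ = false)]
  congr 1
  · refine Finset.sum_congr ?_ fun _ _ => rfl
    ext ξ
    simp only [Finset.mem_filter, mem_feasible]
    constructor
    · rintro ⟨⟨h1, h2⟩, h3⟩
      rw [tailSum_succ, h3] at h2
      refine ⟨fun j hj => ?_, by simpa using h2⟩
      rcases Nat.lt_succ_iff_lt_or_eq.mp hj with h | h
      · exact h1 j h
      · rwa [Fin.ext h]
    · rintro ⟨h1, h2⟩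
      have h3 := h1 ℓ (by omega)
      exact ⟨⟨fun j hj => h1 j (by omega), by simpa [tailSum_succ, h3] using h2⟩, h3⟩
  · symm
    refine Finset.sum_bij' (fun ξ _ => upd n ξ ℓ.val) (fun ξ _ => Function.update ξ ℓ false)
      ?_ ?_ ?_ ?_ ?_
    · intro ξ hξ
      simp only [Finset.mem_filter, mem_feasible] at hξ ⊢
      obtain ⟨⟨h1, h2⟩, h3⟩ := hξ
      refine ⟨⟨fun j hj => ?_, ?_⟩, by simp [upd]⟩
      · have hne : j.val ≠ ℓ.val := by omega
        simpa [upd, hne] using h1 j (by omega)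
      · simpa [tailSum_succ, upd_eq_update, tailSum_update] using h3
    · intro ξ hξ
      simp only [Finset.mem_filter, mem_feasible, Bool.not_eq_false] at hξ ⊢
      obtain ⟨⟨h1, h2⟩, h3⟩ := hξ
      rw [tailSum_succ, h3, if_pos rfl] at h2
      rw [tailSum_update]
      refine ⟨⟨fun j hj => ?_, by linarith [ha ℓ]⟩, h2⟩
      by_cases h : j = ℓ
      · simp [h]
      · rw [Function.update_of_ne h]
        exact h1 j (by have := Fin.val_ne_of_ne h; omega)
    · intro ξ hξ
      simp only [Finset.mem_filter, mem_feasible] at hξ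
      have h := hξ.1.1 ℓ (by omega)
      simp [upd_eq_update, ← h]
    · intro ξ hξ
      simp only [Finset.mem_filter, Bool.not_eq_false] at hξ
      simp [upd_eq_update, ← hξ.2]
    · intro ξ _
      rfl

lemma abs_max_sub_max_le_add (x y x' y' : ℝ) :
    |max x y - max x' y'| ≤ |x - x'| + |y - y'| :=
  (abs_max_sub_max_le_max x y x' y').trans
    (max_le_add_of_nonneg (abs_nonneg _) (abs_nonneg _))

/-- The pointwise error bound: the error at level `ℓ + 1` is at most the Bellman residual plus the
errors at the successors. -/
lemma error_step {n : ℕ} (c a : Fin n → ℝ) (b : ℝ) (ha : ∀ j, 0 < a j)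
    (V : ℕ → (Fin n → Bool) → ℝ) (ℓ : Fin n) (ξ : Fin n → Bool)
    (hξ : ξ ∈ feasible n a b (ℓ.val + 1)) :
    |V (ℓ.val + 1) ξ - knapSubVal n c a b (ℓ.val + 1) ξ| ≤
      (if a ℓ + tailSum n (ℓ.val + 1) a ξ ≤ b then
        |max (V ℓ.val ξ) (c ℓ + V ℓ.val (upd n ξ ℓ.val)) - V (ℓ.val + 1) ξ|
      else |V ℓ.val ξ - V (ℓ.val + 1) ξ|) +
      (|V ℓ.val ξ - knapSubVal n c a b ℓ.val ξ| +
        if a ℓ + tailSum n (ℓ.val + 1) a ξ ≤ b then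
          |V ℓ.val (upd n ξ ℓ.val) - knapSubVal n c a b ℓ.val (upd n ξ ℓ.val)| else 0) := by
  obtain ⟨h1, h2⟩ := mem_feasible.mp hξ
  rw [knapSubVal_succ c a b ha ℓ ξ (h1 ℓ (by omega)) h2]
  split_ifs with hf
  · have h3 := abs_max_sub_max_le_add (V ℓ.val ξ) (c ℓ + V ℓ.val (upd n ξ ℓ.val))
      (knapSubVal n c a b ℓ.val ξ) (c ℓ + knapSubVal n c a b ℓ.val (upd n ξ ℓ.val))
    rw [add_sub_add_left_eq_sub] at h3
    refine (abs_sub_le _ (max (V ℓ.val ξ) (c ℓ + V ℓ.val (upd n ξ ℓ.val))) _).trans ?_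
    rw [abs_sub_comm (V (ℓ.val + 1) ξ)]
    gcongr
  · rw [add_zero, abs_sub_comm (V ℓ.val ξ) (V (ℓ.val + 1) ξ)]
    exact abs_sub_le _ _ _

lemma le_sum_of_step {n : ℕ} (E : ℕ → ℝ) (D : Fin n → ℝ) (h0 : E 0 = 0)
    (h : ∀ ℓ : Fin n, E (ℓ.val + 1) ≤ D ℓ + E ℓ.val) : E n ≤ ∑ ℓ, D ℓ := by
  have h1 : ∑ ℓ : Fin n, (E (ℓ.val + 1) - E ℓ.val) = E n := by
    rw [Fin.sum_univ_eq_sum_range (fun k => E (k + 1) - E k), Finset.sum_range_sub, h0, sub_zero]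
  rw [← h1]
  exact Finset.sum_le_sum fun ℓ _ => by linarith [h ℓ]

lemma knapSubVal_zero {n : ℕ} (c a : Fin n → ℝ) (b : ℝ) (ξ : Fin n → Bool)
    (h : tailSum n 0 a ξ ≤ b) : knapSubVal n c a b 0 ξ = 0 := by
  obtain ⟨⟨x, -, hx⟩, -⟩ := knapSubVal_isGreatest c a b 0 ξ h
  simpa [headSum] using hx

/-- `Φ_n(V, V*) ≤ Ψ_n(V)`: for a finite set `I` of knapsack instances
`i = (c, a, b)` of dimension `n` (with `a_j > 0`, `b ≥ 0`), a probability mass function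
`p` on `I`, and a value function `V i` for each `i ∈ I`,
`Σ_i p(i)·|V(n; i, 0) − V*(n; i, 0)| ≤
 Σ_i p(i)·Σ_{k=1}^{n} Σ { δ̄(k; i, ξ) : ξ ∈ B_{n,k}, Σ_{j>k} a_j ξ_j ≤ b }`.
The summation index `ℓ : Fin n` represents the level `k = ℓ.val + 1 ∈ {1,…,n}`. -/
theorem knap_Phi_le_Psi (n : ℕ) (I : Finset ((Fin n → ℝ) × (Fin n → ℝ) × ℝ))
    (hI : ∀ i ∈ I, (∀ j, 0 < i.2.1 j) ∧ 0 ≤ i.2.2)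
    (p : (Fin n → ℝ) × (Fin n → ℝ) × ℝ → ℝ)
    (hp0 : ∀ i ∈ I, 0 ≤ p i) (hp1 : ∑ i ∈ I, p i = 1)
    (V : (Fin n → ℝ) × (Fin n → ℝ) × ℝ → ℕ → (Fin n → Bool) → ℝ)
    (hV0 : ∀ i ∈ I, ∀ ξ, V i 0 ξ = 0) :
    ∑ i ∈ I, p i *
        |V i n (fun _ => false) - knapSubVal n i.1 i.2.1 i.2.2 n (fun _ => false)| ≤
      ∑ i ∈ I, p i *
        ∑ ℓ : Fin n,
          ∑ ξ ∈ Finset.univ.filter (fun ξ : Fin n → Bool =>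
              (∀ j : Fin n, j.val ≤ ℓ.val → ξ j = false) ∧
              tailSum n (ℓ.val + 1) i.2.1 ξ ≤ i.2.2),
            (if i.2.1 ℓ + tailSum n (ℓ.val + 1) i.2.1 ξ ≤ i.2.2 then
              |max (V i ℓ.val ξ) (i.1 ℓ + V i ℓ.val (upd n ξ ℓ.val)) - V i (ℓ.val + 1) ξ|
            else
              |V i ℓ.val ξ - V i (ℓ.val + 1) ξ|) := by
  refine Finset.sum_le_sum fun i hi => mul_le_mul_of_nonneg_left ?_ (hp0 i hi)
  obtain ⟨ha, hb⟩ := hI i hi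
  have hzero : (fun _ => false) ∈ feasible n i.2.1 i.2.2 n :=
    mem_feasible.mpr ⟨fun _ _ => rfl, by simpa [tailSum] using hb⟩
  refine (Finset.single_le_sum
    (f := fun ξ => |V i n ξ - knapSubVal n i.1 i.2.1 i.2.2 n ξ|)
    (fun _ _ => abs_nonneg _) hzero).trans ?_
  refine le_sum_of_step (fun k => ∑ ξ ∈ feasible n i.2.1 i.2.2 k,
    |V i k ξ - knapSubVal n i.1 i.2.1 i.2.2 k ξ|) _ ?_ fun ℓ => ?_
  · refine Finset.sum_eq_zero fun ξ hξ => ?_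
    rw [hV0 i hi, knapSubVal_zero _ _ _ _ (mem_feasible.mp hξ).2, sub_zero, abs_zero]
  · have hset : Finset.univ.filter (fun ξ : Fin n → Bool =>
        (∀ j : Fin n, j.val ≤ ℓ.val → ξ j = false) ∧
        tailSum n (ℓ.val + 1) i.2.1 ξ ≤ i.2.2) = feasible n i.2.1 i.2.2 (ℓ.val + 1) := by
      ext ξ
      simp [mem_feasible]
    rw [hset]
    rw [sum_feasible i.2.1 i.2.2 ha ℓ, ← Finset.sum_add_distrib]
    exact Finset.sum_le_sum fun ξ hξ => error_step i.1 i.2.1 i.2.2 ha (V i) ℓ ξ hξ
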